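/- Let (R, m) be a Noetherian local ring such that R/U_R(0) is Cohen-Macaulay. Let x = x_1, ..., x_t be a system of parameters of R (t = dim R) and y = y_1, ..., y_t a sequence of elements of R with (y) ⊆^A (x) for some t×t matrix A over R. Then the image of y is a system of parameters of R/U_R(0) if and only if the determinantal map det(A): R/(x)^lim → R/(y)^lim is injective. -/

import Mathlib

/-!
Write `S = R/U`. The proof reduces the claim to the Cohen-Macaulay ring `S`, of dimension `t`.

Limit closures do not see `U` (`mem_lim_iff_mk`): since `dim U < t`, some power `(y₁⋯y_t)ⁿ` lies in
`(y₁ⁿ⁺¹, …, y_tⁿ⁺¹)` modulo the annihilator of `U`, an elementary form of the vanishing of top local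
cohomology (`exists_prod_pow_mem`). Hence the determinantal maps over `R` and over `S` agree.

If `y` generates an ideal of `S` primary to the maximal ideal `m`, then some powers of the `x i` lie
in `(y)`. The composite of the determinantal maps from `x` to `y` and from `y` to these powers of `x`
is multiplication by a power of `x₁⋯x_t`, because determinantal maps do not depend on the matrix
(`det_sub_det_mem_lim`). This is injective modulo limit closures, so the first map is injective
(`mem_lim_of_det_mul`).

Conversely, let `y` lie in a prime `p ≠ m` of `S`. Every system of parameters of `S` is regular in
any order (`paramsRegular_of_isRegular`), and parameter ideals are limit closed
(`ParamsRegular.lim_le`). In terms of local cohomology the claim is that `H^t_m(S) → H^t_p(S)` has a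
kernel meeting the submodule `S/(x)`. A nonzero kernel element is found in `S/(u)` for some system of
parameters `u` (`exists_kernel_of_ne_maximalIdeal`): after dividing out nonzerodivisors in `p`, the
ideal `p` is contained in an associated prime `P = Ann(z)`, and `z` is killed by every sequence
generating `P` up to radical. It is then carried to a power sequence of `x`, and from there down to
`x` itself by lowering the exponents one at a time (`DetKernel.descend`).
-/

open IsLocalRing

/-- The limit closure `(x)^lim = ⋃_{n>0} ((x₁^{n+1}, …, x_r^{n+1}) :_R (x₁⋯x_r)^n)` of a
sequence `x = x₁, …, x_r` of elements of `R`; the union of the increasing family of ideals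
is expressed as a supremum. -/
def limitClosure {R : Type*} [CommRing R] {M : Type*} [AddCommGroup M] [Module R M]
    {r : ℕ} (x : Fin r → R) : Submodule R M :=
  ⨆ n : ℕ, (Ideal.span (Set.range fun i => x i ^ (n + 2)) • (⊤ : Submodule R M)).comap
    (LinearMap.lsmul R M ((∏ i, x i) ^ (n + 1)))

/-- The dimension of a module `M`: the Krull dimension of `R ⧸ Ann M`. -/
noncomputable def moduleDim (R M : Type*) [CommRing R] [AddCommGroup M] [Module R M] :
    WithBot ℕ∞ :=
  ringKrullDim (R ⧸ Module.annihilator R M)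

/-- A system of parameters of a Noetherian local ring `R` of dimension `t`: a sequence of `t`
elements of the maximal ideal generating an ideal primary to the maximal ideal. -/
def IsSOP (R : Type*) [CommRing R] [IsLocalRing R] {t : ℕ} (x : Fin t → R) : Prop :=
  (∀ i, x i ∈ maximalIdeal R) ∧ (Ideal.span (Set.range x)).radical = maximalIdeal R

/-- A (Noetherian, local) ring is Cohen–Macaulay if it admits a regular sequence whose length
equals its Krull dimension. -/
def IsCohenMacaulayRing (A : Type*) [CommRing A] : Prop :=
  ∃ rs : List A, RingTheory.Sequence.IsRegular A rs ∧
    (rs.length : WithBot ℕ∞) = ringKrullDim A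

/-! ### Limit closures and determinantal maps -/

theorem pow_mem_span_of_le {R : Type*} [CommRing R] {t : ℕ} (x : Fin t → R) (e f : Fin t → ℕ)
    {a c : R} (h : a ∈ Ideal.span (Set.range fun i => x i ^ e i))
    (hc : ∀ i, x i ^ f i ∣ c * x i ^ e i) :
    c * a ∈ Ideal.span (Set.range fun i => x i ^ f i) := by
  induction h using Submodule.span_induction with
  | mem a ha =>
    obtain ⟨i, rfl⟩ := ha
    exact Ideal.mem_of_dvd _ (hc i) (Ideal.subset_span ⟨i, rfl⟩)
  | zero => simp
  | add a b _ _ ha hb => rw [mul_add]; exact add_mem ha hb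
  | smul r a _ ha =>
    rw [smul_eq_mul, mul_left_comm]; exact Ideal.mul_mem_left _ _ ha

theorem lim_step {R : Type*} [CommRing R] {t : ℕ} (x : Fin t → R) (a : R) {n m : ℕ}
    (hnm : n ≤ m) (h : (∏ i, x i) ^ n * a ∈ Ideal.span (Set.range fun i => x i ^ (n + 1))) :
    (∏ i, x i) ^ m * a ∈ Ideal.span (Set.range fun i => x i ^ (m + 1)) := by
  obtain ⟨k, rfl⟩ := Nat.exists_eq_add_of_le hnm
  have := pow_mem_span_of_le x (fun _ => n + 1) (fun _ => n + k + 1) (c := (∏ i, x i) ^ k) h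
    (fun i => by
      have h1 : x i ^ k ∣ (∏ i, x i) ^ k := pow_dvd_pow_of_dvd (Finset.dvd_prod_of_mem _ (by simp)) _
      have : x i ^ (n + k + 1) = x i ^ k * x i ^ (n + 1) := by ring
      rw [this]
      exact mul_dvd_mul_right h1 _)
  rwa [← mul_assoc, ← pow_add, add_comm k n] at this

/-- The supremum defining the limit closure is an increasing union; the stage `n = 0`, the ideal
`(x)` itself, may be added to it. -/
theorem mem_lim {R : Type*} [CommRing R] {t : ℕ} {x : Fin t → R} {a : R} :
    a ∈ limitClosure (M := R) x ↔
      ∃ n, (∏ i, x i) ^ n * a ∈ Ideal.span (Set.range fun i => x i ^ (n + 1)) := by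
  unfold limitClosure
  rw [Submodule.mem_iSup_of_directed]
  · constructor
    · rintro ⟨n, hn⟩
      refine ⟨n + 1, ?_⟩
      simpa using hn
    · rintro ⟨n, hn⟩
      refine ⟨n, ?_⟩
      simpa using lim_step x a (Nat.le_succ n) hn
  · intro n m
    refine ⟨max n m, ?_, ?_⟩
    · intro a ha
      have := lim_step x a (Nat.succ_le_succ (le_max_left n m)) (by simpa using ha)
      simpa using this
    · intro a ha
      have := lim_step x a (Nat.succ_le_succ (le_max_right n m)) (by simpa using ha)
      simpa using this

theorem span_le_lim {R : Type*} [CommRing R] {t : ℕ} (x : Fin t → R) :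
    Ideal.span (Set.range x) ≤ limitClosure (M := R) x := fun a ha =>
  mem_lim.2 ⟨0, by simpa using ha⟩

theorem lim_of_pow {R : Type*} [CommRing R] {t : ℕ} {x : Fin t → R} {a : R} {k : ℕ}
    (h : (∏ i, x i) ^ k * a ∈ limitClosure (M := R) (fun i => x i ^ (k + 1))) :
    a ∈ limitClosure (M := R) x := by
  obtain ⟨n, hn⟩ := mem_lim.1 h
  refine mem_lim.2 ⟨(k + 1) * n + k, ?_⟩
  rw [Finset.prod_pow, ← pow_mul, ← mul_assoc, ← pow_add] at hn
  have e : (fun i => (x i ^ (k + 1)) ^ (n + 1)) = fun i => x i ^ ((k + 1) * n + k + 1) := by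
    funext i; rw [← pow_mul]; congr 1
  rwa [e] at hn

/-- Membership in the span of `x` is being a linear combination; for families this gives a
transition matrix. -/
theorem exists_matrix {R : Type*} [CommRing R] {t : ℕ} {x y : Fin t → R}
    (h : ∀ i, y i ∈ Ideal.span (Set.range x)) :
    ∃ A : Matrix (Fin t) (Fin t) R, y = A.mulVec x := by
  choose c hc using fun i => (Ideal.mem_span_range_iff_exists_fun).1 (h i)
  exact ⟨Matrix.of c, funext fun i => by simp [Matrix.mulVec, dotProduct, hc i]⟩

theorem mulVec_mem {R : Type*} [CommRing R] {t : ℕ} (A : Matrix (Fin t) (Fin t) R)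
    (x : Fin t → R) (i : Fin t) : A.mulVec x i ∈ Ideal.span (Set.range x) :=
  Ideal.sum_mem (t := Finset.univ) (f := fun j => A i j * x j) _ fun j _ =>
    Ideal.mul_mem_left _ _ (Ideal.subset_span ⟨j, rfl⟩)

/-- Cramer's rule. -/
theorem det_mul_mem {R : Type*} [CommRing R] {t : ℕ} {x : Fin t → R} {I : Ideal R}
    (A : Matrix (Fin t) (Fin t) R) (h : ∀ i, A.mulVec x i ∈ I) {a : R}
    (ha : a ∈ Ideal.span (Set.range x)) : A.det * a ∈ I := by
  have key : ∀ j, A.det * x j ∈ I := by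
    intro j
    have h1 : A.adjugate.mulVec (A.mulVec x) = A.det • x := by
      rw [Matrix.mulVec_mulVec, Matrix.adjugate_mul, Matrix.smul_mulVec, Matrix.one_mulVec]
    have h2 := congrFun h1 j
    simp only [Pi.smul_apply, smul_eq_mul] at h2
    rw [← h2]
    exact I.sum_mem (t := Finset.univ) (f := fun i => A.adjugate j i * A.mulVec x i)
      fun i _ => I.mul_mem_left _ (h i)
  induction ha using Submodule.span_induction with
  | mem a ha => obtain ⟨i, rfl⟩ := ha; exact key i
  | zero => simp
  | add a b _ _ ha hb => rw [mul_add]; exact add_mem ha hb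
  | smul r a _ ha => rw [smul_eq_mul, mul_left_comm]; exact Ideal.mul_mem_left _ _ ha

/-- A matrix taking `x` to `y` except for a zero in position `k` has determinant in `(y)^lim`:
scaling the remaining rows by the `y i` and applying Cramer's rule gives
`y₁⋯y_t · det D ∈ (y₁², …, y_t²)`. -/
theorem det_mem_lim_of_zero {R : Type*} [CommRing R] {t : ℕ} {x y : Fin t → R} (k : Fin t)
    (hy : y k ∈ Ideal.span (Set.range x))
    (D : Matrix (Fin t) (Fin t) R) (h0 : D.mulVec x k = 0)
    (hD : ∀ i, i ≠ k → D.mulVec x i = y i) : D.det ∈ limitClosure (M := R) y := by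
  refine mem_lim.2 ⟨1, ?_⟩
  let v : Fin t → R := fun i => if i = k then 1 else y i
  have h1 := det_mul_mem (x := x) (I := Ideal.span (Set.range fun i => y i ^ (1 + 1)))
    (Matrix.diagonal v * D) (by
      intro i
      rw [← Matrix.mulVec_mulVec, Matrix.mulVec_diagonal]
      by_cases hi : i = k
      · subst hi; simp [h0]
      · rw [hD i hi]
        simp only [v, hi, if_false]
        exact Ideal.subset_span ⟨i, by ring⟩) hy
  have h2 : ∏ i, y i = (∏ i, v i) * y k := by
    have := Finset.mul_prod_erase Finset.univ y (Finset.mem_univ k)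
    have h3 := Finset.mul_prod_erase Finset.univ v (Finset.mem_univ k)
    rw [← this, ← h3]
    simp only [v, if_true, one_mul]
    rw [mul_comm]
    congr 1
    exact Finset.prod_congr rfl fun i hi => by simp [Finset.ne_of_mem_erase hi]
  rw [Matrix.det_mul, Matrix.det_diagonal] at h1
  rw [h2, pow_one]
  convert h1 using 1
  ring

/-- The determinantal map does not depend on the transition matrix. The rows of one matrix are
exchanged one at a time for those of the other. -/
theorem det_sub_det_mem_lim {R : Type*} [CommRing R] {t : ℕ} {x y : Fin t → R}
    (A B : Matrix (Fin t) (Fin t) R) (hA : y = A.mulVec x) (hB : y = B.mulVec x) :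
    A.det - B.det ∈ limitClosure (M := R) y := by
  have hy : ∀ k, y k ∈ Ideal.span (Set.range x) := fun k => by
    rw [hA]
    exact mulVec_mem A x k
  let P : Finset (Fin t) → Matrix (Fin t) (Fin t) R := fun s =>
    Matrix.of fun i j => if i ∈ s then B i j else A i j
  have hP : ∀ s i, (P s).mulVec x i = y i := by
    intro s i
    by_cases hi : i ∈ s
    · rw [hB]; simp [P, Matrix.mulVec, hi]
    · rw [hA]; simp [P, Matrix.mulVec, hi]
  have key : ∀ s : Finset (Fin t), A.det - (P s).det ∈ limitClosure (M := R) y := by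
    intro s
    induction s using Finset.induction_on with
    | empty =>
      have : P ∅ = A := by ext i j; simp [P]
      simp [this]
    | insert k s hk ih =>
      have e1 : P (insert k s) = (P s).updateRow k (B k) := by
        ext i j
        by_cases hi : i = k
        · subst hi; simp [P]
        · simp [P, hi]
      have e2 : P s = (P s).updateRow k (A k) := by
        ext i j
        by_cases hi : i = k
        · subst hi; simp [P, hk]
        · simp [hi]
      have e3 : (P s).det - (P (insert k s)).det = ((P s).updateRow k (A k - B k)).det := by
        have := Matrix.det_updateRow_add (P s) k (A k - B k) (B k)
        rw [sub_add_cancel, ← e2, ← e1] at this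
        rw [this]; ring
      have : A.det - (P (insert k s)).det
          = (A.det - (P s).det) + ((P s).det - (P (insert k s)).det) := by ring
      rw [this, e3]
      refine add_mem ih (det_mem_lim_of_zero (x := x) k (hy k) _ ?_ ?_)
      · have h1 := congrFun hA k
        have h2 := congrFun hB k
        simp only [Matrix.mulVec] at h1 h2 ⊢
        rw [Matrix.updateRow_self, sub_dotProduct, ← h1, ← h2, sub_self]
      · intro i hi
        rw [← hP s i]
        simp only [Matrix.mulVec]
        rw [Matrix.updateRow_ne hi]
  have e : P Finset.univ = B := by ext i j; simp [P]
  exact e ▸ key Finset.univ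

theorem pow_seq_eq {R : Type*} [CommRing R] {t : ℕ} (x : Fin t → R) (k l : ℕ) :
    (fun i => x i ^ (k + l)) = (Matrix.diagonal fun i => x i ^ k).mulVec fun i => x i ^ l := by
  funext i
  rw [Matrix.mulVec_diagonal, pow_add]

theorem exists_pow_mem {R : Type*} [CommRing R] {t : ℕ} {y : Fin t → R} {I : Ideal R}
    (h : ∀ i, y i ∈ I.radical) (k : ℕ) : ∃ N, k ≤ N ∧ ∀ i, y i ^ (N + 1) ∈ I := by
  choose n hn using h
  refine ⟨k + ∑ i, n i, by omega, fun i => I.mem_of_dvd (pow_dvd_pow _ ?_) (hn i)⟩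
  have := Finset.single_le_sum (f := n) (fun i _ => Nat.zero_le _) (Finset.mem_univ i)
  omega

theorem span_le_radical_pow {R : Type*} [CommRing R] {t : ℕ} (x : Fin t → R) (k : ℕ) :
    Ideal.span (Set.range x) ≤ (Ideal.span (Set.range fun i => x i ^ k)).radical := by
  rw [Ideal.span_le]
  rintro _ ⟨i, rfl⟩
  exact ⟨k, Ideal.subset_span ⟨i, rfl⟩⟩

/-- The determinantal map is well defined on quotients by limit closures. -/
theorem det_mul_mem_lim {R : Type*} [CommRing R] {t : ℕ} {x y : Fin t → R}
    (A : Matrix (Fin t) (Fin t) R) (hA : y = A.mulVec x) {a : R}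
    (ha : a ∈ limitClosure (M := R) x) : A.det * a ∈ limitClosure (M := R) y := by
  obtain ⟨n, hn⟩ := mem_lim.1 ha
  obtain ⟨N, -, hN⟩ := exists_pow_mem (y := y) (I := Ideal.span (Set.range fun i => x i ^ (n + 1)))
    (fun i => span_le_radical_pow x _ (by rw [hA]; exact mulVec_mem A x i)) 0
  obtain ⟨B, hB⟩ := exists_matrix hN
  refine lim_of_pow (k := N) ?_
  have h1 := det_sub_det_mem_lim (x := x) (y := fun i => y i ^ (N + 1))
    (Matrix.diagonal (fun i => y i ^ N) * A) (B * Matrix.diagonal (fun i => x i ^ n))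
    (by rw [← Matrix.mulVec_mulVec, ← hA, pow_seq_eq]; simp)
    (by rw [← Matrix.mulVec_mulVec, hB, pow_seq_eq]; simp)
  have h2 : B.det * ((∏ i, x i) ^ n * a) ∈ limitClosure (M := R) (fun i => y i ^ (N + 1)) :=
    span_le_lim _ (det_mul_mem B (fun i => by rw [← hB]; exact Ideal.subset_span ⟨i, rfl⟩) hn)
  simp only [Matrix.det_mul, Matrix.det_diagonal, Finset.prod_pow] at h1
  have h3 := add_mem (Ideal.mul_mem_left _ a h1) h2
  convert h3 using 1
  ring

/-- If some powers of the `x i` lie in `(y)`, the determinantal map is injective: followed by the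
map to `R/(x₁ᴹ⁺¹, …)^lim` it is multiplication by `(x₁⋯x_t)ᴹ`. -/
theorem mem_lim_of_det_mul {R : Type*} [CommRing R] {t : ℕ} {x y : Fin t → R}
    (A : Matrix (Fin t) (Fin t) R) (hA : y = A.mulVec x)
    (hr : ∀ i, x i ∈ (Ideal.span (Set.range y)).radical) {a : R}
    (ha : A.det * a ∈ limitClosure (M := R) y) : a ∈ limitClosure (M := R) x := by
  obtain ⟨N, -, hN⟩ := exists_pow_mem hr 0
  obtain ⟨D, hD⟩ := exists_matrix hN
  refine lim_of_pow (k := N) ?_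
  have h1 := det_sub_det_mem_lim (x := x) (y := fun i => x i ^ (N + 1))
    (Matrix.diagonal (fun i => x i ^ N)) (D * A)
    (by rw [pow_seq_eq]; simp)
    (by rw [← Matrix.mulVec_mulVec, ← hA, hD])
  have h2 := det_mul_mem_lim D hD ha
  simp only [Matrix.det_mul, Matrix.det_diagonal, Finset.prod_pow] at h1
  have h3 := add_mem (Ideal.mul_mem_left _ a h1) h2
  convert h3 using 1
  ring

/-! ### Ideals of small dimension -/

/-- The multiplicative set `{yᵏ (1 + a y)}`. The primes disjoint from it are those which do not
contain `y` and lie below a prime containing `y`, so inverting it lowers the Krull dimension. -/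
def boundaryMonoid {B : Type*} [CommRing B] (y : B) : Submonoid B where
  carrier := {s | ∃ (k : ℕ) (a : B), s = y ^ k * (1 + a * y)}
  one_mem' := ⟨0, 0, by simp⟩
  mul_mem' := by
    rintro _ _ ⟨k, a, rfl⟩ ⟨l, b, rfl⟩
    exact ⟨k + l, a + b + a * b * y, by ring⟩

theorem ringKrullDim_boundary_lt {B : Type*} [CommRing B] (y : B) {t : ℕ}
    (h : ringKrullDim B < ((t + 1 : ℕ) : WithBot ℕ∞)) :
    ringKrullDim (Localization (boundaryMonoid y)) < (t : WithBot ℕ∞) := by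
  by_contra hcon
  rw [not_lt] at hcon
  obtain ⟨l, hl⟩ := Order.le_krullDim_iff.1 hcon
  let S := boundaryMonoid y
  let f : PrimeSpectrum (Localization S) → PrimeSpectrum B :=
    PrimeSpectrum.comap (algebraMap B (Localization S))
  have hf : StrictMono f := by
    have hinj : Function.Injective f := PrimeSpectrum.localization_comap_injective _ S
    have hmono : Monotone f := fun p q hpq => Ideal.comap_mono hpq
    exact hmono.strictMono_of_injective hinj
  let l' := l.map f hf
  have hdis : ∀ s ∈ S, s ∉ l'.last.asIdeal := by
    intro s hs hmem
    have h1 : algebraMap B (Localization S) s ∈ l.last.asIdeal := hmem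
    exact l.last.isPrime.ne_top
      (Ideal.eq_top_of_isUnit_mem _ h1 (IsLocalization.map_units _ ⟨s, hs⟩))
  have hne : l'.last.asIdeal ⊔ Ideal.span {y} ≠ ⊤ := by
    intro htop
    obtain ⟨p, hp, q, hq, hpq⟩ := Submodule.mem_sup.1 ((Ideal.eq_top_iff_one _).1 htop)
    obtain ⟨c, rfl⟩ := Ideal.mem_span_singleton'.1 hq
    refine hdis p ⟨0, -c, ?_⟩ hp
    rw [← hpq]; ring
  obtain ⟨m, hm, hle⟩ := Ideal.exists_le_maximal _ hne
  have hlt : l'.last < ⟨m, hm.isPrime⟩ := by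
    refine lt_of_le_of_ne (le_sup_left.trans hle) fun heq => ?_
    have : y ∈ l'.last.asIdeal := by
      rw [heq]; exact hle (Ideal.mem_sup_right (Ideal.mem_span_singleton_self y))
    exact hdis y ⟨1, 0, by simp⟩ this
  have hlen : (l'.snoc _ hlt).length = t + 1 := by simp [l', hl]
  exact absurd h (not_lt.2 (Order.le_krullDim_iff.2 ⟨_, hlen⟩))

/-- `1 ∈ (y)^lim` if `dim B < t`: the elementary form of the vanishing of `H^t_{(y)}(B)`. By
induction on `t`, inverting the boundary monoid of `y 0`. -/
theorem exists_prod_pow_mem {t : ℕ} : ∀ {B : Type*} [CommRing B],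
    ringKrullDim B < (t : WithBot ℕ∞) → ∀ y : Fin t → B,
      ∃ n, (∏ i, y i) ^ n ∈ Ideal.span (Set.range fun i => y i ^ (n + 1)) := by
  induction t with
  | zero =>
    intro B _ h y
    have : Subsingleton B := by
      by_contra hB
      rw [not_subsingleton_iff_nontrivial] at hB
      exact absurd h (not_lt.2 (by simpa using ringKrullDim_nonneg_of_nontrivial (R := B)))
    exact ⟨0, by rw [Subsingleton.elim ((∏ i, y i) ^ 0) 0]; exact zero_mem _⟩
  | succ t ih =>
    intro B _ h y
    let S := boundaryMonoid (y 0)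
    let y' : Fin t → B := fun i => y i.succ
    obtain ⟨n, hn⟩ := ih (ringKrullDim_boundary_lt (y 0) h)
      (fun i => algebraMap B (Localization S) (y' i))
    -- clear the denominators
    have h1 : algebraMap B (Localization S) ((∏ i, y' i) ^ n) ∈
        (Ideal.span (Set.range fun i => y' i ^ (n + 1))).map
          (algebraMap B (Localization S)) := by
      rw [Ideal.map_span, ← Set.range_comp]
      simpa [map_pow, map_prod, Function.comp_def] using hn
    rw [IsLocalization.algebraMap_mem_map_algebraMap_iff S] at h1
    obtain ⟨s, ⟨k, a, rfl⟩, hs⟩ := h1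
    -- the term with coefficient `a` is a multiple of `y₀ᵏ⁺¹`
    refine ⟨n + k, ?_⟩
    have h2 : (∏ i, y' i) ^ k * y 0 ^ n *
        (y 0 ^ k * (1 + a * y 0) * (∏ i, y' i) ^ n) ∈
          Ideal.span (Set.range fun i => y i ^ (n + k + 1)) := by
      have h3 := pow_mem_span_of_le y' (fun _ => n + 1) (fun _ => n + k + 1)
        (c := (∏ i, y' i) ^ k * y 0 ^ n) hs (fun i => by
          have h1 : y' i ^ k ∣ (∏ i, y' i) ^ k :=
            pow_dvd_pow_of_dvd (Finset.dvd_prod_of_mem _ (by simp)) _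
          have : y' i ^ (n + k + 1) = y' i ^ k * y' i ^ (n + 1) := by ring
          rw [this]
          exact mul_dvd_mul_right (h1.mul_right _) _)
      refine Ideal.span_mono ?_ h3
      rintro _ ⟨i, rfl⟩
      exact ⟨i.succ, rfl⟩
    have h4 : y 0 ^ (n + k + 1) ∈ Ideal.span (Set.range fun i => y i ^ (n + k + 1)) :=
      Ideal.subset_span ⟨0, rfl⟩
    have h5 := sub_mem h2 (Ideal.mul_mem_left _ (a * (∏ i, y' i) ^ (n + k)) h4)
    rw [Fin.prod_univ_succ]
    convert h5 using 1
    simp only [y']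
    ring

/-- Limit closures do not see an ideal of dimension `< t`. -/
theorem mem_lim_iff_mk {R : Type*} [CommRing R] {t : ℕ} (U : Ideal R)
    (hU : moduleDim R U < (t : WithBot ℕ∞)) (y : Fin t → R) (a : R) :
    a ∈ limitClosure (M := R) y ↔ Ideal.Quotient.mk U a ∈
      limitClosure (M := R ⧸ U) (fun i => Ideal.Quotient.mk U (y i)) := by
  have hmap : ∀ n, (Ideal.span (Set.range fun i => y i ^ (n + 1))).map (Ideal.Quotient.mk U) =
      Ideal.span (Set.range fun i => (Ideal.Quotient.mk U (y i)) ^ (n + 1)) := by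
    intro n
    rw [Ideal.map_span, ← Set.range_comp]
    simp [Function.comp_def]
  constructor
  · intro h
    obtain ⟨n, hn⟩ := mem_lim.1 h
    refine mem_lim.2 ⟨n, ?_⟩
    rw [← hmap]
    simpa using Ideal.mem_map_of_mem (Ideal.Quotient.mk U) hn
  · intro h
    obtain ⟨n, hn⟩ := mem_lim.1 h
    rw [← hmap, ← map_prod, ← map_pow, ← map_mul, ← Ideal.mem_comap,
      Ideal.comap_map_of_surjective _ Ideal.Quotient.mk_surjective, ← RingHom.ker_eq_comap_bot,
      Ideal.mk_ker] at hn
    obtain ⟨b, hb, u, hu, hbu⟩ := Submodule.mem_sup.1 hn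
    obtain ⟨k, hk⟩ := exists_prod_pow_mem hU
      (fun i => Ideal.Quotient.mk (Module.annihilator R U) (y i ^ (n + 1)))
    have h1 : Ideal.Quotient.mk (Module.annihilator R U) ((∏ i, y i ^ (n + 1)) ^ k) ∈
        (Ideal.span (Set.range fun i => (y i ^ (n + 1)) ^ (k + 1))).map
          (Ideal.Quotient.mk (Module.annihilator R U)) := by
      rw [Ideal.map_span, ← Set.range_comp]
      simpa [map_pow, map_prod, Function.comp_def] using hk
    rw [← Ideal.mem_comap,
      Ideal.comap_map_of_surjective _ Ideal.Quotient.mk_surjective, ← RingHom.ker_eq_comap_bot,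
      Ideal.mk_ker] at h1
    obtain ⟨c, hc, v, hv, hcv⟩ := Submodule.mem_sup.1 h1
    have hvu : v * u = 0 := by
      have := (Module.mem_annihilator.1 hv) ⟨u, hu⟩
      simpa using congrArg Subtype.val this
    refine mem_lim.2 ⟨n + (n + 1) * k, ?_⟩
    have e : (fun i => (y i ^ (n + 1)) ^ (k + 1)) = fun i => y i ^ (n + (n + 1) * k + 1) := by
      funext i; rw [← pow_mul]; congr 1; ring
    rw [e] at hc
    have h2 := pow_mem_span_of_le y (fun _ => n + 1) (fun _ => n + (n + 1) * k + 1)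
      (c := (∏ i, y i ^ (n + 1)) ^ k) hb (fun i => by
        have h1 : (y i ^ (n + 1)) ^ k ∣ (∏ i, y i ^ (n + 1)) ^ k :=
          pow_dvd_pow_of_dvd (Finset.dvd_prod_of_mem _ (by simp)) _
        have : y i ^ (n + (n + 1) * k + 1) = (y i ^ (n + 1)) ^ k * y i ^ (n + 1) := by ring
        rw [this]
        exact mul_dvd_mul_right h1 _)
    have h3 := add_mem h2 (Ideal.mul_mem_left _ u hc)
    have h4 : (∏ i, y i) ^ (n + (n + 1) * k) * a
        = (∏ i, y i ^ (n + 1)) ^ k * b + u * c := by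
      have : (∏ i, y i) ^ (n + (n + 1) * k) * a
          = (∏ i, y i ^ (n + 1)) ^ k * ((∏ i, y i) ^ n * a) := by
        rw [Finset.prod_pow]; ring
      rw [this, ← hbu, mul_add, ← hcv]
      linear_combination hvu
    rwa [h4]

/-! ### Parameters in a Cohen-Macaulay ring -/

/-- Prime avoidance. -/
theorem exists_mem_forall_notMem {R : Type*} [CommRing R] (I : Ideal R) (F : Set (Ideal R))
    (hF : F.Finite) (hp : ∀ p ∈ F, p.IsPrime ∧ ¬ I ≤ p) : ∃ b ∈ I, ∀ p ∈ F, b ∉ p := by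
  by_contra hcon
  push Not at hcon
  have h1 : (I : Set R) ⊆ ⋃ p ∈ (↑hF.toFinset : Set (Ideal R)), (p : Set R) := by
    intro b hb
    obtain ⟨p, hpF, hbp⟩ := hcon b hb
    simp only [Set.Finite.coe_toFinset, Set.mem_iUnion]
    exact ⟨p, hpF, hbp⟩
  obtain ⟨p, hpF, hle⟩ := (Ideal.subset_union_prime (f := fun p : Ideal R => p) ⊤ ⊤
    (fun p hpF _ _ => (hp p (by simpa using hpF)).1)).1 h1
  exact (hp p (by simpa using hpF)).2 hle

/-- If `J + (r)` is primary to the maximal ideal `m`, so is `J + (b)` for every `b` avoiding the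
nonmaximal minimal primes of `J`: by Krull's principal ideal theorem no prime lies strictly between
such a minimal prime and `m`. -/
theorem maximalIdeal_le_radical_sup {S : Type*} [CommRing S] [IsNoetherianRing S] [IsLocalRing S]
    (J : Ideal S) {r b : S} (hrm : r ∈ maximalIdeal S)
    (h : maximalIdeal S ≤ (J ⊔ Ideal.span {r}).radical)
    (hb : ∀ p ∈ J.minimalPrimes, p ≠ maximalIdeal S → b ∉ p) :
    maximalIdeal S ≤ (J ⊔ Ideal.span {b}).radical := by
  rw [Ideal.radical_eq_sInf, le_sInf_iff]
  rintro Q ⟨hQ, hQp⟩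
  by_contra hne
  have hQm : Q ≤ maximalIdeal S := IsLocalRing.le_maximalIdeal hQp.ne_top
  obtain ⟨P, hP, hPQ⟩ := Ideal.exists_minimalPrimes_le (le_sup_left.trans hQ)
  have hPp := hP.isPrime
  have hbQ : b ∈ Q := hQ (Ideal.mem_sup_right (Ideal.mem_span_singleton_self b))
  have hPm : P ≠ maximalIdeal S := fun e => hne (e ▸ hPQ)
  have hbP := hb P hP hPm
  have hmin : maximalIdeal S ∈ (P ⊔ Ideal.span {r}).minimalPrimes := by
    have hm : (maximalIdeal S).IsPrime := inferInstance
    have hr : maximalIdeal S ≤ (P ⊔ Ideal.span {r}).radical :=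
      h.trans (Ideal.radical_mono (sup_le_sup_right hP.le _))
    have hpr : ∀ q : Ideal S, q.IsPrime → P ⊔ Ideal.span {r} ≤ q → maximalIdeal S ≤ q :=
      fun q hq hle => hr.trans (hq.radical_le_iff.2 hle)
    refine ⟨⟨hm, sup_le (hPQ.trans hQm) ?_⟩, fun q hq _ => hpr q hq.1 hq.2⟩
    rw [Ideal.span_singleton_le_iff_mem]
    exact hrm
  have hht := Ideal.map_height_le_one_of_mem_minimalPrimes hmin
  have hlt1 : P < Q := lt_of_le_of_ne hPQ fun e => hbP (e ▸ hbQ)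
  have hlt2 : Q < maximalIdeal S := lt_of_le_of_ne hQm fun e => hne e.ge
  have hprime : ∀ K : Ideal S, P ≤ K → K.IsPrime → (K.map (Ideal.Quotient.mk P)).IsPrime :=
    fun K hPK hK => Ideal.map_isPrime_of_surjective Ideal.Quotient.mk_surjective
      (by rwa [Ideal.mk_ker])
  have hmap : ∀ K L : Ideal S, P ≤ K → K < L →
      K.map (Ideal.Quotient.mk P) < L.map (Ideal.Quotient.mk P) := by
    intro K L hPK hKL
    refine lt_of_le_of_ne (Ideal.map_mono hKL.le) fun e => hKL.ne ?_
    rw [← Ideal.comap_map_mk hPK, ← Ideal.comap_map_mk (hPK.trans hKL.le), e]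
  have i1 := hprime P le_rfl hPp
  have i2 := hprime Q hPQ hQp
  have i3 := hprime _ (hPQ.trans hQm) (inferInstance : (maximalIdeal S).IsPrime)
  have l1 := Ideal.height_add_one_le_of_lt_of_isPrime (hmap P Q le_rfl hlt1)
  have l2 := Ideal.height_add_one_le_of_lt_of_isPrime (hmap Q _ hPQ hlt2)
  have l3 : ((1 : ℕ∞) + 1) ≤ 1 :=
    ((add_le_add_left (le_add_self.trans l1) 1).trans l2).trans hht
  exact absurd l3 (by decide)

/-- If `J` kills `N` and a power of the `N`-regular element `r` lies in `J + (b)`, then `b` is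
`N`-regular. -/
theorem isSMulRegular_of_mem_radical {S N : Type*} [CommRing S] [AddCommGroup N] [Module S N]
    {J : Ideal S} (hJ : ∀ a ∈ J, ∀ v : N, a • v = 0) {r b : S}
    (hr : r ∈ (J ⊔ Ideal.span {b}).radical) (h : IsSMulRegular N r) : IsSMulRegular N b := by
  rw [isSMulRegular_iff_right_eq_zero_of_smul]
  intro v hv
  obtain ⟨n, hn⟩ := hr
  obtain ⟨a, ha, c, hc, hac⟩ := Submodule.mem_sup.1 hn
  obtain ⟨d, rfl⟩ := Ideal.mem_span_singleton'.1 hc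
  refine (isSMulRegular_iff_right_eq_zero_of_smul.1 (h.pow n)) v ?_
  rw [← hac, add_smul, hJ a ha, mul_smul, hv, smul_zero, add_zero]

open RingTheory.Sequence in
/-- Modulo an ideal `I` annihilating `M`, if one system of parameters is `M`-regular then so is
every other of the same length. An element `b` is chosen which may replace the first member of
both sequences; the exchange preserves regularity in both directions, and one passes to `M/bM`. -/
theorem isWeaklyRegular_exchange {S : Type*} [CommRing S] [IsNoetherianRing S] [IsLocalRing S]
    (rs : List S) : ∀ {M : Type*} [AddCommGroup M] [Module S M] [Module.Finite S M]
    (xs : List S) (I : Ideal S), I ≤ Module.annihilator S M → rs.length = xs.length →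
    (∀ r ∈ rs, r ∈ maximalIdeal S) → (∀ r ∈ xs, r ∈ maximalIdeal S) →
    maximalIdeal S ≤ (I ⊔ Ideal.ofList rs).radical →
    maximalIdeal S ≤ (I ⊔ Ideal.ofList xs).radical →
    IsWeaklyRegular M rs → IsWeaklyRegular M xs := by
  induction rs with
  | nil =>
    intro M _ _ _ xs I _ hlen _ _ _ _ _
    obtain rfl : xs = [] := List.length_eq_zero_iff.1 hlen.symm
    exact IsWeaklyRegular.nil S M
  | cons r rs ih =>
    intro M _ _ _ xs I hI hlen hrm hxm hr hx hreg
    obtain _ | ⟨x, xs⟩ := xs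
    · simp at hlen
    have hN : IsNoetherian S M := isNoetherian_of_isNoetherianRing_of_finite S M
    have hr' : maximalIdeal S ≤ ((I ⊔ Ideal.ofList rs) ⊔ Ideal.span {r}).radical := by
      rwa [Ideal.ofList_cons, sup_comm (Ideal.span {r}), ← sup_assoc] at hr
    have hx' : maximalIdeal S ≤ ((I ⊔ Ideal.ofList xs) ⊔ Ideal.span {x}).radical := by
      rwa [Ideal.ofList_cons, sup_comm (Ideal.span {x}), ← sup_assoc] at hx
    obtain ⟨b, hbm, hb⟩ := exists_mem_forall_notMem (maximalIdeal S)
      {p | (p ∈ (I ⊔ Ideal.ofList rs).minimalPrimes ∨ p ∈ (I ⊔ Ideal.ofList xs).minimalPrimes) ∧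
        p ≠ maximalIdeal S}
      (((Ideal.finite_minimalPrimes_of_isNoetherianRing S _).union
        (Ideal.finite_minimalPrimes_of_isNoetherianRing S _)).subset fun p hp => hp.1)
      (fun p hp => by
        have hpp : p.IsPrime := hp.1.elim (fun h => h.isPrime) (fun h => h.isPrime)
        exact ⟨hpp, fun hle => hp.2 (le_antisymm (IsLocalRing.le_maximalIdeal hpp.ne_top) hle)⟩)
    have hrb := maximalIdeal_le_radical_sup _ (hrm r (by simp)) hr'
      (b := b) fun p hp hne => hb p ⟨Or.inl hp, hne⟩
    have hxb := maximalIdeal_le_radical_sup _ (hxm x (by simp)) hx'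
      (b := b) fun p hp hne => hb p ⟨Or.inr hp, hne⟩
    have hrs : ∀ s ∈ rs, s ∈ maximalIdeal S := fun s hs => hrm s (by simp [hs])
    have hxs : ∀ s ∈ xs, s ∈ maximalIdeal S := fun s hs => hxm s (by simp [hs])
    -- `c` is moved to the end of the sequence, replaced there by `d`, and moved back
    have exch : ∀ (l : List S) (c d : S), (∀ s ∈ l, s ∈ maximalIdeal S) → c ∈ maximalIdeal S →
        d ∈ maximalIdeal S → c ∈ ((I ⊔ Ideal.ofList l) ⊔ Ideal.span {d}).radical →
        IsWeaklyRegular M (c :: l) → IsWeaklyRegular M (d :: l) := by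
      intro l c d hl hc hd hcd h
      have h1 := IsLocalRing.isWeaklyRegular_of_perm_of_subset_maximalIdeal h
        (List.perm_append_singleton c l).symm (List.forall_mem_cons.2 ⟨hc, hl⟩)
      rw [isWeaklyRegular_append_iff, isWeaklyRegular_singleton_iff] at h1
      have h2 : IsWeaklyRegular M (l ++ [d]) := by
        rw [isWeaklyRegular_append_iff, isWeaklyRegular_singleton_iff]
        refine ⟨h1.1, isSMulRegular_of_mem_radical ?_ hcd h1.2⟩
        intro a ha v
        obtain ⟨v, rfl⟩ := Submodule.Quotient.mk_surjective _ v
        rw [← Submodule.Quotient.mk_smul, Submodule.Quotient.mk_eq_zero]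
        obtain ⟨i, hi, j, hj, rfl⟩ := Submodule.mem_sup.1 ha
        rw [add_smul, Module.mem_annihilator.1 (hI hi), zero_add]
        exact Submodule.smul_mem_smul hj trivial
      exact IsLocalRing.isWeaklyRegular_of_perm_of_subset_maximalIdeal h2
        (List.perm_append_singleton d l) (by
          intro s hs
          rcases List.mem_append.1 hs with hs | hs
          · exact hl s hs
          · rw [List.mem_singleton.1 hs]; exact hd)
    have hb1 := exch rs r b hrs (hrm r (by simp)) hbm (hrb (hrm r (by simp))) hreg
    rw [isWeaklyRegular_cons_iff] at hb1
    have hI' : I ⊔ Ideal.span {b} ≤ Module.annihilator S (QuotSMulTop b M) := by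
      intro a ha
      rw [Module.mem_annihilator]
      intro v
      obtain ⟨v, rfl⟩ := Submodule.Quotient.mk_surjective _ v
      rw [← Submodule.Quotient.mk_smul, Submodule.Quotient.mk_eq_zero]
      obtain ⟨i, hi, j, hj, rfl⟩ := Submodule.mem_sup.1 ha
      obtain ⟨d, rfl⟩ := Ideal.mem_span_singleton.1 hj
      rw [add_smul, Module.mem_annihilator.1 (hI hi), zero_add, mul_smul]
      exact Submodule.smul_mem_pointwise_smul _ _ _ trivial
    have h3 := ih (M := QuotSMulTop b M) xs (I ⊔ Ideal.span {b}) hI' (by simpa using hlen) hrs hxs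
      (by rwa [sup_right_comm]) (by rwa [sup_right_comm]) hb1.2
    refine exch xs b x hxs hbm (hxm x (by simp)) (hx' hbm) ?_
    rw [isWeaklyRegular_cons_iff]
    exact ⟨hb1.1, h3⟩

/-- Every sequence of length `t` generating an ideal which is primary to the maximal ideal (or the
unit ideal) is regular in any order: each member is a nonzerodivisor modulo the others. For
`t = dim S` this is the Cohen-Macaulay property. -/
def ParamsRegular (S : Type*) [CommRing S] [IsLocalRing S] (t : ℕ) : Prop :=
  ∀ x : Fin t → S, maximalIdeal S ≤ (Ideal.span (Set.range x)).radical →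
    ∀ (i : Fin t) (a : S), x i * a ∈ Ideal.span (x '' {i}ᶜ) → a ∈ Ideal.span (x '' {i}ᶜ)

open RingTheory.Sequence in
/-- In a Cohen-Macaulay local ring every system of parameters is regular in any order. A sequence
with a unit among its members is treated separately, as it is not a system of parameters. -/
theorem paramsRegular_of_isRegular {S : Type*} [CommRing S] [IsNoetherianRing S] [IsLocalRing S]
    {t : ℕ} (rs : List S) (hrs : IsRegular S rs) (hlen : rs.length = t)
    (hdim : ringKrullDim S = t) : ParamsRegular S t := by
  have hrm : ∀ r ∈ rs, r ∈ maximalIdeal S := by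
    intro r hr
    refine IsLocalRing.le_maximalIdeal (J := Ideal.ofList rs) ?_ (Ideal.subset_span hr)
    intro h
    exact hrs.2 (by rw [h]; simp)
  have hrr : maximalIdeal S ≤ (Ideal.ofList rs).radical := by
    have h1 := ringKrullDim_add_length_eq_ringKrullDim_of_isRegular rs hrs
    rw [hdim, hlen] at h1
    have h0 : ringKrullDim (S ⧸ Ideal.ofList rs) ≤ 0 := by
      generalize ringKrullDim (S ⧸ Ideal.ofList rs) = d at h1
      induction d with
      | bot => exact bot_le
      | coe d =>
        have h2 : ((d + (t : ℕ∞) : ℕ∞) : WithBot ℕ∞) = ((t : ℕ∞) : WithBot ℕ∞) := h1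
        have h3 : d + (t : ℕ∞) = 0 + (t : ℕ∞) := by rw [zero_add]; exact WithBot.coe_injective h2
        have h4 : d = 0 := (ENat.add_left_injective_of_ne_top (ENat.natCast_ne_top t)) h3
        rw [h4]; rfl
    rw [Ideal.radical_eq_sInf, le_sInf_iff]
    rintro Q ⟨hQ, hQp⟩
    have hk : Ring.KrullDimLE 0 (S ⧸ Ideal.ofList rs) := by
      rw [Ring.krullDimLE_iff]; exact h0
    have hQ' : (Q.map (Ideal.Quotient.mk (Ideal.ofList rs))).IsPrime :=
      Ideal.map_isPrime_of_surjective Ideal.Quotient.mk_surjective (by rwa [Ideal.mk_ker])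
    have hQm := hQ'.isMaximal'
    have := Ideal.comap_isMaximal_of_surjective (Ideal.Quotient.mk (Ideal.ofList rs))
      Ideal.Quotient.mk_surjective (K := Q.map (Ideal.Quotient.mk (Ideal.ofList rs)))
    rw [Ideal.comap_map_mk hQ] at this
    exact (IsLocalRing.eq_maximalIdeal this).ge
  intro x hx i a ha
  obtain _ | n := t
  · exact i.elim0
  rw [← Fin.range_succAbove, ← Set.range_comp] at ha ⊢
  by_cases hxm : ∀ j, x j ∈ maximalIdeal S
  · let l : List S := List.ofFn (x ∘ i.succAbove)
    have hl : Ideal.ofList l = Ideal.span (Set.range (x ∘ i.succAbove)) := by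
      unfold Ideal.ofList
      congr 1
      ext s
      simp [l, List.mem_ofFn]
    have hlx : Ideal.ofList (l ++ [x i]) = Ideal.span (Set.range x) := by
      rw [Ideal.ofList_append, hl, Ideal.ofList_singleton, ← Ideal.span_union]
      congr 1
      rw [Set.range_comp, Fin.range_succAbove, ← Set.image_singleton, ← Set.image_union,
        Set.compl_union_self, Set.image_univ]
    have hreg := isWeaklyRegular_exchange rs (M := S) (l ++ [x i]) ⊥ bot_le
      (by simp [l, hlen]) hrm
      (by
        intro s hs
        rcases List.mem_append.1 hs with hs | hs
        · obtain ⟨j, rfl⟩ := (List.mem_ofFn' _ _).1 hs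
          exact hxm _
        · rw [List.mem_singleton.1 hs]; exact hxm i)
      (by rwa [bot_sup_eq]) (by rwa [bot_sup_eq, hlx]) hrs.1
    rw [isWeaklyRegular_append_iff, isWeaklyRegular_singleton_iff, hl] at hreg
    have h1 := isSMulRegular_iff_right_eq_zero_of_smul.1 hreg.2 (Submodule.Quotient.mk a)
    rw [← Submodule.Quotient.mk_smul, Submodule.Quotient.mk_eq_zero,
      Submodule.Quotient.mk_eq_zero] at h1
    simpa using h1 (by simpa using ha)
  · push Not at hxm
    obtain ⟨j, hj⟩ := hxm
    have hu : IsUnit (x j) := by simpa using hj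
    by_cases hji : j = i
    · subst hji
      exact (Ideal.unit_mul_mem_iff_mem _ hu).1 ha
    · obtain ⟨k, rfl⟩ := Fin.exists_succAbove_eq hji
      rw [Ideal.eq_top_of_isUnit_mem _ (show x (i.succAbove k) ∈ Ideal.span (Set.range (x ∘ i.succAbove)) from
        Ideal.subset_span ⟨k, rfl⟩) hu]
      trivial

/-! ### Parameter ideals are limit closed; generation up to radical -/

theorem span_range_update {R : Type*} [CommRing R] {t : ℕ} (x : Fin t → R) (i : Fin t) (h : R) :
    Ideal.span (Set.range (Function.update x i h)) =
      Ideal.span {h} ⊔ Ideal.span (x '' {i}ᶜ) := by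
  rw [← Ideal.span_union]
  congr 1
  ext s
  constructor
  · rintro ⟨j, rfl⟩
    by_cases hj : j = i
    · subst hj; simp
    · right; exact ⟨j, hj, by simp [hj]⟩
  · rintro (rfl | ⟨j, hj, rfl⟩)
    · exact ⟨i, by simp⟩
    · exact ⟨j, by simp [show j ≠ i from hj]⟩

theorem mem_span_update {R : Type*} [CommRing R] {t : ℕ} {x : Fin t → R} {i : Fin t} {h a : R} :
    a ∈ Ideal.span (Set.range (Function.update x i h)) ↔
      ∃ b, a - b * h ∈ Ideal.span (x '' {i}ᶜ) := by
  rw [span_range_update, Ideal.mem_span_singleton_sup]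
  constructor
  · rintro ⟨b, c, hc, rfl⟩
    exact ⟨b, by simpa using hc⟩
  · rintro ⟨b, hb⟩
    exact ⟨b, _, hb, by ring⟩

/-- `(…, f g, …) : f ⊆ (…, g, …)` for parameters, the remaining members being unchanged. -/
theorem ParamsRegular.colon_update {S : Type*} [CommRing S] [IsLocalRing S] {t : ℕ}
    (hS : ParamsRegular S t) {x : Fin t → S} {i : Fin t} {f g c : S}
    (hx : maximalIdeal S ≤ (Ideal.span (Set.range (Function.update x i (f * g)))).radical)
    (hc : f * c ∈ Ideal.span (Set.range (Function.update x i (f * g)))) :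
    c ∈ Ideal.span (Set.range (Function.update x i g)) := by
  obtain ⟨b, hb⟩ := mem_span_update.1 hc
  refine mem_span_update.2 ⟨b, ?_⟩
  have himg : Function.update x i f '' {i}ᶜ = x '' {i}ᶜ :=
    Set.image_congr fun j hj => Function.update_of_ne hj _ _
  have hf : maximalIdeal S ≤ (Ideal.span (Set.range (Function.update x i f))).radical := by
    refine hx.trans (Ideal.radical_mono ?_)
    rw [span_range_update, span_range_update]
    exact sup_le_sup_right (Ideal.span_singleton_le_span_singleton.2 (dvd_mul_right f g)) _
  have h1 := hS _ hf i (c - b * g)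
  rw [himg, Function.update_self] at h1
  refine h1 ?_
  convert hb using 1
  ring

theorem pow_update {R : Type*} [CommRing R] {t : ℕ} (x : Fin t → R) (e : Fin t → ℕ) (i : Fin t)
    (k : ℕ) : (fun j => x j ^ (Function.update e i k j + 1)) =
      Function.update (fun j => x j ^ (e j + 1)) i (x i ^ (k + 1)) := by
  funext j
  by_cases hj : j = i
  · subst hj; simp
  · simp [hj]

theorem sum_update_lt {t : ℕ} (e : Fin t → ℕ) (i : Fin t) {k : ℕ} (hk : k < e i) :
    ∑ j, Function.update e i k j < ∑ j, e j := by
  refine Finset.sum_lt_sum (fun j _ => ?_) ⟨i, Finset.mem_univ i, by simpa using hk⟩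
  by_cases hj : j = i
  · subst hj; simpa using hk.le
  · simp [hj]

theorem le_radical_pow {S : Type*} [CommRing S] [IsLocalRing S] {t : ℕ} {x : Fin t → S}
    (hx : maximalIdeal S ≤ (Ideal.span (Set.range x)).radical) (e : Fin t → ℕ) :
    maximalIdeal S ≤ (Ideal.span (Set.range fun i => x i ^ e i)).radical := by
  refine hx.trans ?_
  rw [Ideal.radical_le_radical_iff, Ideal.span_le]
  rintro _ ⟨i, rfl⟩
  exact ⟨e i, Ideal.subset_span ⟨i, rfl⟩⟩

/-- Monomial cancellation modulo powers of parameters. -/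
theorem ParamsRegular.mem_of_prod_mul_mem {S : Type*} [CommRing S] [IsLocalRing S] {t : ℕ}
    (hS : ParamsRegular S t) {x : Fin t → S}
    (hx : maximalIdeal S ≤ (Ideal.span (Set.range x)).radical) (s : ℕ) {a : S} :
    ∀ e : Fin t → ℕ, ∑ i, e i = s →
      (∏ i, x i ^ e i) * a ∈ Ideal.span (Set.range fun i => x i ^ (e i + 1)) →
      a ∈ Ideal.span (Set.range x) := by
  induction s using Nat.strong_induction_on with
  | _ s ih =>
    intro e he ha
    by_cases h0 : ∀ i, e i = 0
    · simpa [h0] using ha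
    push Not at h0
    obtain ⟨i, hi⟩ := h0
    obtain ⟨k, hk⟩ := Nat.exists_eq_succ_of_ne_zero hi
    refine ih _ (he ▸ sum_update_lt e i (k := k) (by omega)) (Function.update e i k) rfl ?_
    have e1 : (fun j => x j ^ (e j + 1)) =
        Function.update (fun j => x j ^ (e j + 1)) i (x i * x i ^ (k + 1)) := by
      rw [← pow_succ', Function.eq_update_iff]
      exact ⟨by simp [hk], fun _ _ => rfl⟩
    have e2 : ∏ j, x j ^ e j = x i * ∏ j, x j ^ (Function.update e i k j) := by
      rw [← Finset.mul_prod_erase Finset.univ (fun j => x j ^ e j) (Finset.mem_univ i),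
        ← Finset.mul_prod_erase Finset.univ (fun j => x j ^ (Function.update e i k j))
          (Finset.mem_univ i), ← mul_assoc]
      congr 1
      · rw [Function.update_self, hk]
        exact pow_succ' _ _
      · exact Finset.prod_congr rfl fun j hj => by simp [Finset.ne_of_mem_erase hj]
    rw [pow_update]
    have hr := le_radical_pow hx (fun j => e j + 1)
    rw [e1] at hr
    rw [e1, e2, mul_assoc] at ha
    exact hS.colon_update hr ha

/-- In the Cohen-Macaulay case parameter ideals are limit closed. -/
theorem ParamsRegular.lim_le {S : Type*} [CommRing S] [IsLocalRing S] {t : ℕ}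
    (hS : ParamsRegular S t) {x : Fin t → S}
    (hx : maximalIdeal S ≤ (Ideal.span (Set.range x)).radical) :
    limitClosure (M := S) x ≤ Ideal.span (Set.range x) := by
  intro a ha
  obtain ⟨n, hn⟩ := mem_lim.1 ha
  refine hS.mem_of_prod_mul_mem hx _ (fun _ => n) rfl ?_
  rwa [Finset.prod_pow]

/-- An ideal of a Noetherian local ring of dimension at most `t` is generated up to radical by `t`
of its elements. The elements are chosen by prime avoidance so that a prime containing the first
`n` of them, but not all of `P`, has height at least `n`. -/
theorem exists_le_radical {S : Type*} [CommRing S] [IsNoetherianRing S] [IsLocalRing S] {t : ℕ}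
    (hdim : ringKrullDim S ≤ t) (P : Ideal S) (hP : P ≤ maximalIdeal S) :
    ∃ w : Fin t → S, (∀ i, w i ∈ P) ∧ P ≤ (Ideal.span (Set.range w)).radical := by
  have key : ∀ n : ℕ, ∃ w : Fin n → S, (∀ i, w i ∈ P) ∧ ∀ Q : Ideal S, Q.IsPrime →
      Ideal.span (Set.range w) ≤ Q → ¬ P ≤ Q → (n : ℕ∞) ≤ Q.height := by
    intro n
    induction n with
    | zero => exact ⟨Fin.elim0, fun i => i.elim0, fun Q _ _ _ => by simp⟩
    | succ n ih =>
      obtain ⟨w, hw, hQ⟩ := ih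
      obtain ⟨b, hbP, hb⟩ := exists_mem_forall_notMem P
        {p | p ∈ (Ideal.span (Set.range w)).minimalPrimes ∧ ¬ P ≤ p}
        ((Ideal.finite_minimalPrimes_of_isNoetherianRing S _).subset fun p hp => hp.1)
        (fun p hp => ⟨hp.1.isPrime, hp.2⟩)
      refine ⟨Fin.cons b w, Fin.cases hbP hw, fun Q hQp hle hPQ => ?_⟩
      rw [Ideal.span_le, Fin.range_cons, Set.insert_subset_iff] at hle
      obtain ⟨q, hq, hqQ⟩ := Ideal.exists_minimalPrimes_le (Ideal.span_le.2 hle.2)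
      have hqp := hq.isPrime
      have hqP : ¬ P ≤ q := fun h => hPQ (h.trans hqQ)
      have hlt : q < Q := lt_of_le_of_ne hqQ fun h => hb q ⟨hq, hqP⟩ (h ▸ hle.1)
      have h1 := hQ q hqp hq.le hqP
      have h2 := Ideal.height_add_one_le_of_lt_of_isPrime hlt
      push_cast
      exact (add_le_add_left h1 1).trans h2
  obtain ⟨w, hw, hQ⟩ := key t
  refine ⟨w, hw, ?_⟩
  rw [Ideal.radical_eq_sInf, le_sInf_iff]
  rintro Q ⟨hwQ, hQp⟩
  by_contra hPQ
  have h1 := hQ Q hQp hwQ hPQ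
  have hlt : Q < maximalIdeal S := lt_of_le_of_ne (IsLocalRing.le_maximalIdeal hQp.ne_top)
    fun h => hPQ (h ▸ hP)
  have h2 := Ideal.height_add_one_le_of_lt_of_isPrime hlt
  have h3 := IsLocalRing.maximalIdeal_height_eq_ringKrullDim (R := S)
  rw [← h3] at hdim
  have h4 : (maximalIdeal S).height ≤ (t : ℕ∞) := by exact_mod_cast hdim
  have h5 : (t : ℕ∞) + 1 ≤ t := ((add_le_add_left h1 1).trans h2).trans h4
  have h6 : t + 1 ≤ t := by exact_mod_cast h5
  omega

/-! ### The kernel of the determinantal maps -/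

/-- The class of `z` in `S/(u)` lies in the kernel of the determinantal map from `u` to some power
sequence `y₁^{L+1}, …, y_t^{L+1}`, that is, it vanishes in `colim_L S/(y₁^{L+1}, …, y_t^{L+1})^lim`.
-/
def DetKernel {S : Type*} [CommRing S] {t : ℕ} (y u : Fin t → S) (z : S) : Prop :=
  ∃ (L : ℕ) (G : Matrix (Fin t) (Fin t) S), (fun i => y i ^ (L + 1)) = G.mulVec u ∧
    G.det * z ∈ limitClosure (M := S) (fun i => y i ^ (L + 1))

namespace DetKernel

variable {S : Type*} [CommRing S] {t : ℕ} {y u v : Fin t → S} {z z' : S}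

/-- A kernel element for `u` in the image of the determinantal map from `v` to `u` comes from a
kernel element for `v`. -/
theorem of_mulVec (C : Matrix (Fin t) (Fin t) S) (hu : u = C.mulVec v)
    (h : DetKernel y u (C.det * z)) : DetKernel y v z := by
  obtain ⟨L, G, hG, hz⟩ := h
  refine ⟨L, G * C, ?_, ?_⟩
  · rw [hG, hu, Matrix.mulVec_mulVec]
  · rwa [Matrix.det_mul, mul_assoc]

theorem mul_left (c : S) (h : DetKernel y u z) : DetKernel y u (c * z) := by
  obtain ⟨L, G, hG, hz⟩ := h
  refine ⟨L, G, hG, ?_⟩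
  rw [mul_left_comm]
  exact Ideal.mul_mem_left _ _ hz

theorem of_sub_mem (h : DetKernel y u z) (hz : z - z' ∈ Ideal.span (Set.range u)) :
    DetKernel y u z' := by
  obtain ⟨L, G, hG, hL⟩ := h
  refine ⟨L, G, hG, ?_⟩
  have h1 := det_mul_mem_lim G hG (span_le_lim _ hz)
  have h2 := sub_mem hL h1
  rwa [← mul_sub, sub_sub_cancel] at h2

/-- The kernel is compatible with the determinantal map from `u` to `v`. -/
theorem mulVec (D : Matrix (Fin t) (Fin t) S) (hv : v = D.mulVec u)
    (hy : ∀ i, y i ∈ (Ideal.span (Set.range v)).radical) (h : DetKernel y u z) :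
    DetKernel y v (D.det * z) := by
  obtain ⟨L, G, hG, hz⟩ := h
  obtain ⟨N, hLN, hN⟩ := exists_pow_mem hy L
  obtain ⟨H, hH⟩ := exists_matrix hN
  obtain ⟨k, rfl⟩ := Nat.exists_eq_add_of_le' hLN
  refine ⟨k + L, H, hH, ?_⟩
  have hk := pow_seq_eq y k (L + 1)
  have h1 := det_mul_mem_lim _ hk hz
  have h2 := det_sub_det_mem_lim (x := u) (y := fun i => y i ^ (k + L + 1)) (H * D)
    (Matrix.diagonal (fun i => y i ^ k) * G)
    (by rw [← Matrix.mulVec_mulVec, ← hv, ← hH]) (by rw [← Matrix.mulVec_mulVec, ← hG, ← hk]; rfl)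
  have h3 := add_mem (Ideal.mul_mem_left _ z h2) h1
  rw [Matrix.det_mul, Matrix.det_mul] at h3
  convert h3 using 1
  ring

/-- Passing from `y` to its powers is injective modulo limit closures. -/
theorem det_mul_mem (A : Matrix (Fin t) (Fin t) S) (hy : y = A.mulVec u) (h : DetKernel y u z) :
    A.det * z ∈ limitClosure (M := S) y := by
  obtain ⟨L, G, hG, hz⟩ := h
  refine lim_of_pow (k := L) ?_
  have h2 := det_sub_det_mem_lim (x := u) (y := fun i => y i ^ (L + 1))
    (Matrix.diagonal (fun i => y i ^ L) * A) G
    (by rw [← Matrix.mulVec_mulVec, ← hy, pow_seq_eq]; simp) hG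
  have h3 := add_mem (Ideal.mul_mem_left _ z h2) hz
  rw [Matrix.det_mul, Matrix.det_diagonal, Finset.prod_pow] at h3
  convert h3 using 1
  ring

end DetKernel

theorem update_mul_eq {S : Type*} [CommRing S] {t : ℕ} (x : Fin t → S) (i : Fin t) (g h : S) :
    Function.update x i (g * h) =
      (Matrix.diagonal (Function.update 1 i g)).mulVec (Function.update x i h) := by
  funext j
  rw [Matrix.mulVec_diagonal]
  by_cases hj : j = i
  · subst hj; simp
  · simp [hj]

theorem det_diagonal_update {S : Type*} [CommRing S] {t : ℕ} (i : Fin t) (g : S) :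
    (Matrix.diagonal (Function.update (1 : Fin t → S) i g)).det = g := by
  rw [Matrix.det_diagonal, Finset.prod_update_of_mem (Finset.mem_univ i)]
  simp

/-- Nontrivial kernel elements descend from powers of `x` to `x` itself. Lowering one exponent
either keeps `z` outside the ideal, or `z` is a multiple of a power of `x i` modulo the other
members and can be divided by it. -/
theorem DetKernel.descend {S : Type*} [CommRing S] {t : ℕ} {x y : Fin t → S} (s : ℕ) :
    ∀ (e : Fin t → ℕ) (z : S), ∑ i, e i = s →
      z ∉ Ideal.span (Set.range fun i => x i ^ (e i + 1)) →
      DetKernel y (fun i => x i ^ (e i + 1)) z →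
      ∃ z', z' ∉ Ideal.span (Set.range x) ∧ DetKernel y x z' := by
  induction s using Nat.strong_induction_on with
  | _ s ih =>
    intro e z he hz hK
    by_cases h0 : ∀ i, e i = 0
    · simp only [h0, zero_add, pow_one] at hz hK
      exact ⟨z, hz, hK⟩
    push Not at h0
    obtain ⟨i, hi⟩ := h0
    obtain ⟨k, hk⟩ := Nat.exists_eq_succ_of_ne_zero hi
    have e1 : ∀ g h : S, g * h = x i ^ (k + 2) → (fun j => x j ^ (e j + 1)) =
        Function.update (fun j => x j ^ (e j + 1)) i (g * h) := by
      intro g h hgh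
      rw [hgh, Function.eq_update_iff]
      exact ⟨by simp [hk], fun _ _ => rfl⟩
    -- division by `g` in the `i`-th entry
    have e2 : ∀ (g h c : S), g * h = x i ^ (k + 2) →
        DetKernel y (fun j => x j ^ (e j + 1)) (g * c) →
        DetKernel y (Function.update (fun j => x j ^ (e j + 1)) i h) c := by
      intro g h c hgh hc
      refine DetKernel.of_mulVec (Matrix.diagonal (Function.update 1 i g)) ?_
        (by rwa [det_diagonal_update])
      rw [← update_mul_eq]
      exact e1 g h hgh
    by_cases hz' : z ∈ Ideal.span (Set.range fun j => x j ^ (Function.update e i k j + 1))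
    · rw [pow_update] at hz'
      obtain ⟨b, hb⟩ := mem_span_update.1 hz'
      refine ih _ (he ▸ sum_update_lt e i (k := 0) (by omega)) (Function.update e i 0) b rfl ?_ ?_
      · intro hbm
        rw [pow_update] at hbm
        obtain ⟨c, hc⟩ := mem_span_update.1 hbm
        refine hz ?_
        rw [e1 _ _ (pow_succ (x i) (k + 1)).symm]
        refine mem_span_update.2 ⟨c, ?_⟩
        convert add_mem hb (Ideal.mul_mem_left _ (x i ^ (k + 1)) hc) using 1
        ring
      · rw [pow_update]
        refine e2 (x i ^ (k + 1)) _ b (by ring) (hK.of_sub_mem ?_)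
        rw [e1 _ _ (pow_succ (x i) (k + 1)).symm, mul_comm (x i ^ (k + 1)) b]
        exact mem_span_update.2 ⟨0, by simpa using hb⟩
    · refine ih _ (he ▸ sum_update_lt e i (k := k) (by omega)) (Function.update e i k) z rfl hz' ?_
      rw [pow_update]
      exact e2 (x i) _ z (by ring) (hK.mul_left _)

/-! ### Nonmaximal primes give nontrivial kernels -/

universe u₀

theorem mk_mem_span_image_iff {S : Type*} [CommRing S] (q : S) (T : Set S) (a : S) :
    Ideal.Quotient.mk (Ideal.span {q}) a ∈
        Ideal.span (Ideal.Quotient.mk (Ideal.span {q}) '' T) ↔ a ∈ Ideal.span (insert q T) := by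
  rw [← Ideal.map_span, Ideal.mem_quotient_iff_mem_sup, Ideal.span_insert, sup_comm]

theorem image_cons_compl {S : Type*} {t : ℕ} (q : S) (x : Fin t → S) (i : Fin t) :
    (Fin.cons q x : Fin (t + 1) → S) '' {i.succ}ᶜ = insert q (x '' {i}ᶜ) := by
  ext s
  constructor
  · rintro ⟨j, hj, rfl⟩
    cases j using Fin.cases with
    | zero => simp
    | succ j => right; exact ⟨j, fun h => hj (by rw [Set.mem_singleton_iff.1 h]; rfl), by simp⟩
  · rintro (rfl | ⟨j, hj, rfl⟩)
    · exact ⟨0, by simp [(Fin.succ_ne_zero i).symm], by simp⟩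
    · exact ⟨j.succ, by simpa using hj, by simp⟩

theorem ParamsRegular.quotient {S : Type*} [CommRing S] [IsLocalRing S] {t : ℕ}
    (hS : ParamsRegular S (t + 1)) (q : S) [IsLocalRing (S ⧸ Ideal.span {q})] :
    ParamsRegular (S ⧸ Ideal.span {q}) t := by
  intro xb hx i ab
  choose x hxx using fun i => Ideal.Quotient.mk_surjective (xb i)
  obtain ⟨a, rfl⟩ := Ideal.Quotient.mk_surjective ab
  obtain rfl : xb = fun i => Ideal.Quotient.mk (Ideal.span {q}) (x i) := funext fun i => (hxx i).symm
  have h1 := hS (Fin.cons q x) (by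
    intro r hr
    have hr' : Ideal.Quotient.mk (Ideal.span {q}) r ∈ maximalIdeal (S ⧸ Ideal.span {q}) := by
      have := Ideal.comap_isMaximal_of_surjective (Ideal.Quotient.mk (Ideal.span {q}))
        Ideal.Quotient.mk_surjective (K := maximalIdeal (S ⧸ Ideal.span {q}))
      rw [← IsLocalRing.eq_maximalIdeal this] at hr
      exact hr
    obtain ⟨n, hn⟩ := hx hr'
    refine ⟨n, ?_⟩
    rw [Fin.range_cons, ← mk_mem_span_image_iff, map_pow, ← Set.range_comp]
    exact hn) i.succ a
  rw [image_cons_compl, Fin.cons_succ, ← mk_mem_span_image_iff, ← mk_mem_span_image_iff,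
    ← Set.image_comp, map_mul] at h1
  exact h1

/-- The transition matrix `1 ⊕ E`. -/
def consMatrix {S : Type*} [CommRing S] {t : ℕ} (E : Matrix (Fin t) (Fin t) S) :
    Matrix (Fin (t + 1)) (Fin (t + 1)) S :=
  Matrix.of (Fin.cons (Fin.cons 1 0) fun i => Fin.cons 0 (E i))

theorem consMatrix_det {S : Type*} [CommRing S] {t : ℕ} (E : Matrix (Fin t) (Fin t) S) :
    (consMatrix E).det = E.det := by
  rw [Matrix.det_succ_row_zero, Fin.sum_univ_succ]
  have : (consMatrix E).submatrix Fin.succ Fin.succ = E := by ext; simp [consMatrix]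
  simp [consMatrix] at this ⊢
  rw [this]

theorem consMatrix_mulVec {S : Type*} [CommRing S] {t : ℕ} (E : Matrix (Fin t) (Fin t) S)
    (q : S) (v : Fin t → S) :
    (consMatrix E).mulVec (Fin.cons q v : Fin (t + 1) → S) = Fin.cons q (E.mulVec v) := by
  funext i
  cases i using Fin.cases with
  | zero => simp [consMatrix, Matrix.mulVec, dotProduct, Fin.sum_univ_succ]
  | succ i => simp [consMatrix, Matrix.mulVec, dotProduct, Fin.sum_univ_succ]

/-- For a nonmaximal prime `p` there is a determinantal map `S/(u) → S/(w)^lim` with `(u)` primary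
to the maximal ideal and `p ⊆ √(w)` which is not injective. Nonzerodivisors in `p` are divided
out. Once `p` consists of zerodivisors it lies in some associated prime `P = Ann(z)`; one takes `w`
generating `P` up to radical, so that each `w i` kills `z`, and `u` deep enough not to contain
`z`. -/
theorem exists_kernel_of_ne_maximalIdeal {t : ℕ} :
    ∀ {S : Type u₀} [CommRing S] [IsNoetherianRing S] [IsLocalRing S],
    ringKrullDim S ≤ t → ParamsRegular S t → ∀ p : Ideal S, p.IsPrime → p ≠ maximalIdeal S →
    ∃ (u w : Fin t → S) (E : Matrix (Fin t) (Fin t) S) (z : S),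
      maximalIdeal S ≤ (Ideal.span (Set.range u)).radical ∧ w = E.mulVec u ∧
      p ≤ (Ideal.span (Set.range w)).radical ∧ z ∉ Ideal.span (Set.range u) ∧
      (∏ i, w i) * (E.det * z) ∈ Ideal.span (Set.range fun i => w i ^ 2) := by
  induction t with
  | zero =>
    intro S _ _ _ hdim _ p hp hne
    have hk : Ring.KrullDimLE 0 S := by rw [Ring.krullDimLE_iff]; exact hdim
    exact absurd (IsLocalRing.eq_maximalIdeal hp.isMaximal') hne
  | succ t ih =>
    intro S _ _ _ hdim hS p hp hne
    have hpm : p ≤ maximalIdeal S := IsLocalRing.le_maximalIdeal hp.ne_top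
    by_cases hq : ∃ q ∈ p, q ∈ nonZeroDivisors S
    · obtain ⟨q, hqp, hq⟩ := hq
      have hspan : Ideal.span {q} ≤ p := (Ideal.span_singleton_le_iff_mem _).2 hqp
      have hnt : Nontrivial (S ⧸ Ideal.span {q}) :=
        Ideal.Quotient.nontrivial_iff.2 fun h => hp.ne_top (top_le_iff.1 (h ▸ hspan))
      have hloc : IsLocalRing (S ⧸ Ideal.span {q}) :=
        IsLocalRing.of_surjective' _ Ideal.Quotient.mk_surjective
      have hdim' : ringKrullDim (S ⧸ Ideal.span {q}) ≤ t := by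
        have h1 := (ringKrullDim_quotient_succ_le_of_nonZeroDivisor hq).trans hdim
        generalize ringKrullDim (S ⧸ Ideal.span {q}) = d at h1
        induction d with
        | bot => exact bot_le
        | coe d =>
          have h2 : d + 1 ≤ (t : ℕ∞) + 1 := by exact_mod_cast h1
          have h3 : d ≤ (t : ℕ∞) := (ENat.add_le_add_iff_right ENat.one_ne_top).1 h2
          exact_mod_cast h3
      obtain ⟨ub, wb, Eb, zb, hu, hw, hpw, hz, hrel⟩ := ih hdim' (hS.quotient q)
        (p.map (Ideal.Quotient.mk (Ideal.span {q})))
        (Ideal.map_isPrime_of_surjective Ideal.Quotient.mk_surjective (by rwa [Ideal.mk_ker]))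
        (fun h => by
          have := Ideal.comap_isMaximal_of_surjective (Ideal.Quotient.mk (Ideal.span {q}))
            Ideal.Quotient.mk_surjective (K := maximalIdeal (S ⧸ Ideal.span {q}))
          rw [← h, Ideal.comap_map_mk hspan] at this
          exact hne (IsLocalRing.eq_maximalIdeal this))
      choose u huu using fun i => Ideal.Quotient.mk_surjective (ub i)
      choose E hEE using fun i j => Ideal.Quotient.mk_surjective (Eb i j)
      obtain ⟨z, rfl⟩ := Ideal.Quotient.mk_surjective zb
      obtain rfl : ub = Ideal.Quotient.mk (Ideal.span {q}) ∘ u := funext fun i => (huu i).symm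
      obtain rfl : Eb = (Matrix.of E).map (Ideal.Quotient.mk (Ideal.span {q})) := by
        ext i j; simp [hEE]
      obtain rfl : wb = Ideal.Quotient.mk (Ideal.span {q}) ∘ (Matrix.of E).mulVec u := by
        rw [hw]; funext i; exact (RingHom.map_mulVec _ _ _ i).symm
      set w := (Matrix.of E).mulVec u with hwdef
      refine ⟨Fin.cons q u, Fin.cons q w, consMatrix (Matrix.of E), z, ?_, ?_, ?_, ?_, ?_⟩
      · intro r hr
        have hr' : Ideal.Quotient.mk (Ideal.span {q}) r ∈ maximalIdeal (S ⧸ Ideal.span {q}) := by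
          have := Ideal.comap_isMaximal_of_surjective (Ideal.Quotient.mk (Ideal.span {q}))
            Ideal.Quotient.mk_surjective (K := maximalIdeal (S ⧸ Ideal.span {q}))
          rw [← IsLocalRing.eq_maximalIdeal this] at hr
          exact hr
        obtain ⟨n, hn⟩ := hu hr'
        refine ⟨n, ?_⟩
        rwa [Fin.range_cons, ← mk_mem_span_image_iff, map_pow, ← Set.range_comp]
      · rw [consMatrix_mulVec]
      · intro r hr
        obtain ⟨n, hn⟩ := hpw (Ideal.mem_map_of_mem _ hr)
        refine ⟨n, ?_⟩
        rwa [Fin.range_cons, ← mk_mem_span_image_iff, map_pow, ← Set.range_comp]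
      · rwa [Fin.range_cons, ← mk_mem_span_image_iff, ← Set.range_comp]
      · rw [consMatrix_det, Fin.prod_cons]
        have h1 : (∏ i, w i) * ((Matrix.of E).det * z) ∈
            Ideal.span (insert q (Set.range fun i => w i ^ 2)) := by
          rw [← mk_mem_span_image_iff, ← Set.range_comp]
          simpa [Function.comp_def, RingHom.map_det] using hrel
        obtain ⟨c, s, hs, hcs⟩ := Ideal.mem_span_insert.1 h1
        rw [mul_assoc, hcs, mul_add]
        have hr : (fun i => (Fin.cons q w : Fin (t + 1) → S) i ^ 2) =
            Fin.cons (q ^ 2) fun i => w i ^ 2 := by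
          funext i; cases i using Fin.cases <;> simp
        rw [hr, Fin.range_cons, Ideal.span_insert]
        refine add_mem (Ideal.mem_sup_left (Ideal.mem_span_singleton.2 ⟨c, by ring⟩))
          (Ideal.mem_sup_right (Ideal.mul_mem_left _ _ hs))
    · obtain ⟨P, hPass, hpP⟩ : ∃ P ∈ associatedPrimes S S, p ≤ P := by
        by_contra hcon
        push Not at hcon
        obtain ⟨b, hbp, hb⟩ := exists_mem_forall_notMem p (associatedPrimes S S)
          (associatedPrimes.finite S S) (fun P hP => ⟨hP.1, hcon P hP⟩)
        refine hq ⟨b, hbp, ?_⟩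
        by_contra hb'
        have : b ∈ ⋃ P ∈ associatedPrimes S S, (P : Set S) := by
          rw [biUnion_associatedPrimes_eq_compl_nonZeroDivisors]; exact hb'
        simp only [Set.mem_iUnion] at this
        obtain ⟨P, hP, hbP⟩ := this
        exact hb P hP hbP
      obtain ⟨hPp, z, hPz⟩ := isAssociatedPrime_iff.1 hPass
      have hPm : P ≤ maximalIdeal S := IsLocalRing.le_maximalIdeal hPp.ne_top
      have hann : ∀ a, a ∈ P → a * z = 0 := fun a ha => by
        rw [hPz] at ha
        simpa using ha
      have hz0 : z ≠ 0 := by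
        rintro rfl
        refine hPp.ne_top ((Ideal.eq_top_iff_one _).2 ?_)
        rw [hPz]; simp
      obtain ⟨N, hN⟩ : ∃ N, z ∉ maximalIdeal S ^ N := by
        by_contra hcon
        push Not at hcon
        have h1 := Ideal.iInf_pow_eq_bot_of_isLocalRing (maximalIdeal S) Ideal.IsPrime.ne_top'
        exact hz0 (by rw [← Ideal.mem_bot, ← h1]; simpa using hcon)
      obtain ⟨v, hvm, hv⟩ := exists_le_radical hdim (maximalIdeal S) le_rfl
      obtain ⟨w, hwP, hw⟩ := exists_le_radical hdim P hPm
      have hu := le_radical_pow hv fun _ => N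
      obtain ⟨K, -, hK⟩ := exists_pow_mem (y := w) (fun i => hu (hPm (hwP i))) 0
      obtain ⟨E, hE⟩ := exists_matrix hK
      refine ⟨fun i => v i ^ N, fun i => w i ^ (K + 1), E, z, hu, hE, ?_, ?_, ?_⟩
      · exact hpP.trans (hw.trans (Ideal.radical_le_radical_iff.2 (span_le_radical_pow w _)))
      · refine fun h => hN ((Ideal.span_le.2 ?_) h)
        rintro _ ⟨i, rfl⟩
        exact Ideal.pow_mem_pow (hvm i) N
      · rw [Fin.prod_univ_succ]
        have h0 := hann (w 0 ^ (K + 1)) (Ideal.pow_mem_of_mem _ (hwP 0) _ (Nat.succ_pos K))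
        convert Ideal.zero_mem _ using 1
        linear_combination (∏ i : Fin t, w i.succ ^ (K + 1)) * E.det * h0

/-- In the Cohen-Macaulay case, if `(y) ⊆ (x)` with `x` parameters and `y` is contained in a
nonmaximal prime, the determinantal map is not injective. -/
theorem exists_det_mul_mem_lim {S : Type u₀} [CommRing S] [IsNoetherianRing S] [IsLocalRing S]
    {t : ℕ} (hdim : ringKrullDim S ≤ t) (hS : ParamsRegular S t) {x y : Fin t → S}
    (A : Matrix (Fin t) (Fin t) S) (hA : y = A.mulVec x) (hxm : ∀ i, x i ∈ maximalIdeal S)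
    (hx : maximalIdeal S ≤ (Ideal.span (Set.range x)).radical)
    (p : Ideal S) (hp : p.IsPrime) (hne : p ≠ maximalIdeal S) (hy : ∀ i, y i ∈ p) :
    ∃ z, z ∉ limitClosure (M := S) x ∧ A.det * z ∈ limitClosure (M := S) y := by
  obtain ⟨u, w, E, z, hu, hw, hpw, hz, hrel⟩ := exists_kernel_of_ne_maximalIdeal hdim hS p hp hne
  have hK : DetKernel y u z := by
    obtain ⟨L, -, hL⟩ := exists_pow_mem (fun i => hpw (hy i)) 0
    obtain ⟨F, hF⟩ := exists_matrix hL
    refine ⟨L, F * E, by rw [← Matrix.mulVec_mulVec, ← hw, hF], ?_⟩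
    rw [Matrix.det_mul, mul_assoc]
    exact det_mul_mem_lim F hF (mem_lim.2 ⟨1, by simpa using hrel⟩)
  obtain ⟨M, -, hM⟩ := exists_pow_mem (fun i => hu (hxm i)) 0
  obtain ⟨D, hD⟩ := exists_matrix hM
  have hxr := le_radical_pow hx fun _ => M + 1
  have hpm : p ≤ maximalIdeal S := IsLocalRing.le_maximalIdeal hp.ne_top
  have hK' := hK.mulVec D hD fun i => hxr (hpm (hy i))
  obtain ⟨z', hz', hKz'⟩ := DetKernel.descend _ (fun _ => M) (D.det * z) rfl (fun h => by
    by_cases hum : ∀ i, u i ∈ maximalIdeal S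
    · exact hz (hS.lim_le hu (mem_lim_of_det_mul D hD (fun i => hxr (hum i)) (span_le_lim _ h)))
    · push Not at hum
      obtain ⟨i, hi⟩ := hum
      refine hz ?_
      rw [Ideal.eq_top_of_isUnit_mem (Ideal.span (Set.range u)) (Ideal.subset_span ⟨i, rfl⟩)
        (by simpa using hi)]
      trivial) hK'
  exact ⟨z', fun h => hz' (hS.lim_le hx h), hKz'.det_mul_mem A hA⟩

/-! ### Reduction to the quotient by the unmixed component -/

theorem length_le_ringKrullDim_quotient {R : Type*} [CommRing R] (I : Ideal R)
    (l : LTSeries (PrimeSpectrum R)) (h : I ≤ l.head.asIdeal) :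
    (l.length : WithBot ℕ∞) ≤ ringKrullDim (R ⧸ I) := by
  rw [ringKrullDim_quotient]
  have hmem : ∀ i, l i ∈ PrimeSpectrum.zeroLocus (I : Set R) := fun i =>
    (PrimeSpectrum.mem_zeroLocus _ _).2
      (h.trans ((PrimeSpectrum.asIdeal_le_asIdeal _ _).2 (l.head_le i)))
  exact Order.le_krullDim_iff.2 ⟨
    { length := l.length, toFun := fun i => ⟨l i, hmem i⟩, step := fun i => l.step i }, rfl⟩

/-- Dividing out an ideal of smaller dimension does not change the dimension: a prime contains
`U` or its annihilator. -/
theorem ringKrullDim_quotient_eq {R : Type*} [CommRing R] {t : ℕ} (hdim : ringKrullDim R = t)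
    (U : Ideal R) (hU : moduleDim R U < (t : WithBot ℕ∞)) : ringKrullDim (R ⧸ U) = t := by
  refine le_antisymm (hdim ▸ ringKrullDim_quotient_le U) ?_
  obtain ⟨l, hl⟩ := Order.le_krullDim_iff.1 (show (t : WithBot ℕ∞) ≤ Order.krullDim _ from hdim.ge)
  have hprod : U * Module.annihilator R U ≤ l.head.asIdeal := by
    rw [Ideal.mul_le]
    intro a ha b hb
    have h1 := congrArg Subtype.val (Module.mem_annihilator.1 hb ⟨a, ha⟩)
    have h2 : b * a = 0 := h1
    rw [mul_comm, h2]
    exact zero_mem _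
  rcases (l.head.isPrime.mul_le).1 hprod with h | h
  · exact hl ▸ length_le_ringKrullDim_quotient U l h
  · exact absurd (hl ▸ length_le_ringKrullDim_quotient _ l h) (not_le.2 hU)

/-- Let `(R, m)` be a Noetherian local ring of dimension `t` whose quotient by the unmixed
component `U = U_R(0)` (the largest ideal of dimension `< t`) is Cohen–Macaulay.  If `x` is
a system of parameters of `R` and `(y) ⊆^A (x)`, then the image of `y` is a system of
parameters of `R/U` (i.e. `√((y) + U) = m`) if and only if the determinantal map
`det A : R/(x)^lim → R/(y)^lim` is injective (expressed elementwise). -/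
theorem sop_mod_unmixed_iff_determinantal_map_injective_of_CM
    {R : Type*} [CommRing R] [IsNoetherianRing R] [IsLocalRing R]
    {t : ℕ} (hdim : ringKrullDim R = t)
    (U : Ideal R) (hUdim : moduleDim R U < (t : WithBot ℕ∞))
    (hUmax : ∀ J : Ideal R, moduleDim R J < (t : WithBot ℕ∞) → J ≤ U)
    (hCM : IsCohenMacaulayRing (R ⧸ U))
    (x y : Fin t → R) (A : Matrix (Fin t) (Fin t) R)
    (hx : IsSOP R x) (hyA : ∀ i, y i = ∑ j, A i j * x j) :
    (Ideal.span (Set.range y) ⊔ U).radical = maximalIdeal R ↔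
      ∀ r : R, A.det * r ∈ limitClosure (M := R) y → r ∈ limitClosure (M := R) x := by
  have hdimS := ringKrullDim_quotient_eq hdim U hUdim
  have hnt : Nontrivial (R ⧸ U) := by
    by_contra h
    rw [not_nontrivial_iff_subsingleton] at h
    rw [ringKrullDim_eq_bot_of_subsingleton] at hdimS
    exact WithBot.bot_ne_coe hdimS
  have hloc : IsLocalRing (R ⧸ U) := IsLocalRing.of_surjective' _ Ideal.Quotient.mk_surjective
  let π := Ideal.Quotient.mk U
  have hmax : (maximalIdeal (R ⧸ U)).comap π = maximalIdeal R :=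
    IsLocalRing.eq_maximalIdeal
      (Ideal.comap_isMaximal_of_surjective π Ideal.Quotient.mk_surjective)
  have hUm : U ≤ maximalIdeal R :=
    IsLocalRing.le_maximalIdeal (Ideal.Quotient.nontrivial_iff.1 hnt)
  have hyA' : y = A.mulVec x := funext hyA
  have hA : (fun i => π (y i)) = (A.map π).mulVec fun i => π (x i) := by
    funext i
    rw [hyA', RingHom.map_mulVec]
    rfl
  have hdet : ∀ r, π (A.det * r) = (A.map π).det * π r := fun r => by
    rw [map_mul, RingHom.map_det]; rfl
  have hxm : ∀ i, π (x i) ∈ maximalIdeal (R ⧸ U) := fun i => by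
    rw [← Ideal.mem_comap, hmax]; exact hx.1 i
  have hspan : ∀ v : Fin t → R, Ideal.span (Set.range fun i => π (v i)) =
      (Ideal.span (Set.range v)).map π := fun v => by
    rw [Ideal.map_span, ← Set.range_comp]; rfl
  have hxr : maximalIdeal (R ⧸ U) ≤ (Ideal.span (Set.range fun i => π (x i))).radical := by
    intro s hs
    obtain ⟨r, rfl⟩ := Ideal.Quotient.mk_surjective s
    rw [← Ideal.mem_comap, hmax, ← hx.2] at hs
    obtain ⟨n, hn⟩ := hs
    refine ⟨n, ?_⟩
    rw [hspan, ← map_pow]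
    exact Ideal.mem_map_of_mem _ hn
  have hS : ParamsRegular (R ⧸ U) t := by
    obtain ⟨rs, hrs, hlen⟩ := hCM
    rw [hdimS] at hlen
    exact paramsRegular_of_isRegular rs hrs (by exact_mod_cast hlen) hdimS
  constructor
  · intro hrad r hr
    rw [mem_lim_iff_mk U hUdim] at hr ⊢
    refine mem_lim_of_det_mul (A.map π) hA (fun i => ?_) (by rw [← hdet]; exact hr)
    have h1 : x i ∈ (Ideal.span (Set.range y) ⊔ U).radical := hrad ▸ hx.1 i
    obtain ⟨n, hn⟩ := h1
    refine ⟨n, ?_⟩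
    rw [hspan, ← map_pow]
    exact Ideal.mem_quotient_iff_mem_sup.2 hn
  · intro hinj
    by_contra hne
    have hym : Ideal.span (Set.range y) ≤ maximalIdeal R := by
      rw [Ideal.span_le]
      rintro _ ⟨i, rfl⟩
      rw [← hx.2, hyA']
      exact Ideal.le_radical (mulVec_mem A x i)
    have hle : (Ideal.span (Set.range y) ⊔ U).radical ≤ maximalIdeal R :=
      (inferInstance : (maximalIdeal R).IsPrime).radical_le_iff.2 (sup_le hym hUm)
    obtain ⟨p, hp, hple, hpne⟩ : ∃ p : Ideal R, p.IsPrime ∧ Ideal.span (Set.range y) ⊔ U ≤ p ∧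
        p ≠ maximalIdeal R := by
      by_contra hcon
      push Not at hcon
      refine hne (le_antisymm hle ?_)
      rw [Ideal.radical_eq_sInf, le_sInf_iff]
      rintro Q ⟨hQ, hQp⟩
      exact (hcon Q hQp hQ).ge
    have hUp : U ≤ p := le_sup_right.trans hple
    obtain ⟨z, hz, hz'⟩ := exists_det_mul_mem_lim hdimS.le hS (A.map π) hA hxm hxr (p.map π)
      (Ideal.map_isPrime_of_surjective Ideal.Quotient.mk_surjective (by rwa [Ideal.mk_ker]))
      (fun h => hpne (by rw [← hmax, ← h, Ideal.comap_map_mk hUp]))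
      (fun i => Ideal.mem_map_of_mem _ (hple (Ideal.mem_sup_left (Ideal.subset_span ⟨i, rfl⟩))))
    obtain ⟨r, rfl⟩ := Ideal.Quotient.mk_surjective z
    refine hz ((mem_lim_iff_mk U hUdim x r).1 (hinj r ((mem_lim_iff_mk U hUdim y _).2 ?_)))
    exact (hdet r).symm ▸ hz'
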